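/- Let C be a small category such that |N C| is a compact space, let F, F' : C ⥤ C be functors, and let φ : F ⟶ F' be a natural transformation. If the continuous map |N F| : |N C| ⟶ |N C| has a fixed point, then F' has a strict fixed point, i.e., there exists an object X of C with F'(X) = X. -/

import Mathlib

open CategoryTheory

/-- The continuous map `|N F| : |N C| ⟶ |N C|` induced by an endofunctor `F : C ⥤ C`
on the geometric realization of the nerve of `C`. -/
noncomputable def nerveRealizationMap {C : Type} [SmallCategory C] (F : C ⥤ C) :
    SSet.toTop.obj (nerve C) ⟶ SSet.toTop.obj (nerve C) :=
  SSet.toTop.map (nerveFunctor.map (X := Cat.of C) (Y := Cat.of C) F.toCatHom)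

/-!
A point of `|X|` lies in the open cell of a unique nondegenerate simplex, and the initial vertex of
that simplex is natural in `X`, although it does not depend continuously on the point. A fixed point
of `|N F|` therefore yields an object `X` with `F X = X`, and `φ` gives a morphism
`X = F X ⟶ F' X`. Iterating `F'` on it produces a chain `X ⟶ F' X ⟶ F'² X ⟶ ⋯`; if `F'` moved every
object, the initial segments of this chain would be nondegenerate simplices of `N C` of every
dimension.

This is impossible when `|N C|` is compact, because the realization of a simplicial set with
infinitely many nondegenerate simplices carries an unbounded continuous function: a sum of bumps on
the open stars of the nondegenerate simplices, of arbitrarily large heights. On a simplex with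
barycentric coordinates `t`, the bump of a face with vertices `ι 0 < ⋯ < ι k` is `∏ j, t (ι j)`.
-/

section Simplex

open Finset

variable {α β κ : Type*} [Fintype α] [Fintype β]

lemma sum_comp_mul_prod_eq_sum_mul_prod_sum_fiber {R : Type*} [CommSemiring R] [Fintype κ]
    [DecidableEq κ] [DecidableEq β] (f : α → β) (w : (κ → β) → R) (t : α → R) :
    ∑ ι : κ → α, w (f ∘ ι) * ∏ j, t (ι j) =
      ∑ ι : κ → β, w ι * ∏ j, ∑ i with f i = ι j, t i := by
  rw [← sum_fiberwise univ (f ∘ · : (κ → α) → κ → β)]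
  refine sum_congr rfl fun ι _ ↦ ?_
  have fiber_eq : ({ι' | f ∘ ι' = ι} : Finset (κ → α)) =
      Fintype.piFinset fun j ↦ {i | f i = ι j} := by
    ext
    simp [funext_iff]
  rw [prod_univ_sum, mul_sum, fiber_eq]
  exact sum_congr rfl fun ι' hι' ↦ by grind

variable {S : Type*} [Semiring S] [PartialOrder S]

lemma stdSimplex_map_apply [IsOrderedRing S] [DecidableEq β] (f : α → β) (t : stdSimplex S α)
    (b : β) : stdSimplex.map f t b = ∑ a with f a = b, t a :=
  FunOnFinite.linearMap_apply_apply ..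

lemma support_stdSimplex_map [IsOrderedRing S] (f : α → β) (t : stdSimplex S α) :
    Function.support (stdSimplex.map f t) = f '' Function.support t := by
  classical
  ext b
  rw [Function.mem_support, stdSimplex_map_apply,
    Ne, sum_eq_zero_iff_of_nonneg fun _ _ ↦ stdSimplex.zero_le t _]
  simp [and_comm]

variable [Nontrivial S]

lemma support_stdSimplex_nonempty (t : stdSimplex S α) : (Function.support t).Nonempty := by
  by_contra! h
  simpa [Function.support_eq_empty_iff.1 h] using stdSimplex.sum_eq_one t

variable [LinearOrder α] [LinearOrder β]

lemma exists_isLeast_support_stdSimplex (t : stdSimplex S α) :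
    ∃ a, IsLeast (Function.support t) a :=
  (exists_minimal_of_wellFoundedLT _ (support_stdSimplex_nonempty t)).imp
    fun _ ↦ minimal_iff_isLeast.1

/-- The least vertex of the face of the simplex whose relative interior contains `t`. -/
noncomputable def leadingVertex (t : stdSimplex S α) : α :=
  (exists_isLeast_support_stdSimplex t).choose

lemma isLeast_leadingVertex (t : stdSimplex S α) :
    IsLeast (Function.support t) (leadingVertex t) :=
  (exists_isLeast_support_stdSimplex t).choose_spec

lemma leadingVertex_map [IsOrderedRing S] {f : α → β} (hf : Monotone f) (t : stdSimplex S α) :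
    leadingVertex (stdSimplex.map f t) = f (leadingVertex t) := by
  refine (isLeast_leadingVertex _).unique ?_
  rw [support_stdSimplex_map]
  exact hf.map_isLeast (isLeast_leadingVertex t)

end Simplex

universe v u

section Realization

open Opposite Simplicial

variable {X Z : SSet.{u}} {Y : TopCat.{u}} {n : SimplexCategory}

/-- The characteristic map `Δⁿ → |X|` of an `n`-simplex of `X`, not necessarily nondegenerate. -/
noncomputable def characteristicMap (x : X.obj (op n)) :
    C(stdSimplex ℝ (Fin (n.len + 1)), |X|) :=
  TopCat.toSSetObjEquiv |X| (op n) ((sSetTopAdj.unit.app X).app (op n) x)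

lemma toTop_map_characteristicMap (f : X ⟶ Z) (x : X.obj (op n)) (t) :
    SSet.toTop.map f (characteristicMap x t) = characteristicMap (f.app (op n) x) t := by
  have h := ConcreteCategory.congr_hom
    (NatTrans.congr_app (sSetTopAdj.unit_naturality f) (op n)) x
  exact congr(TopCat.toSSetObjEquiv |Z| (op n) $h t)

lemma realization_hom_ext {g h : |X| ⟶ Y}
    (H : ∀ (n : SimplexCategory) (x : X.obj (op n)) (t),
      g (characteristicMap x t) = h (characteristicMap x t)) : g = h := by
  apply (sSetTopAdj.homEquiv X Y).injective
  simp only [Adjunction.homEquiv_unit]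
  ext n x
  apply (TopCat.toSSetObjEquiv Y n).injective
  ext t
  exact H n.unop x t

variable (φ : ∀ n : SimplexCategory, X.obj (op n) → C(stdSimplex ℝ (Fin (n.len + 1)), Y))
  (hφ : ∀ ⦃m n : SimplexCategory⦄ (f : m ⟶ n) (x : X.obj (op n)) (t),
    φ m (X.map f.op x) t = φ n x (stdSimplex.map f t))

/-- The continuous map `|X| ⟶ Y` glued from maps on the standard simplices `Δⁿ`, one for each
`n`-simplex of `X`, that are compatible with the simplicial operators. -/
noncomputable def realizationDesc : |X| ⟶ Y :=
  (sSetTopAdj.homEquiv X Y).symm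
    { app n := ↾fun x ↦ (TopCat.toSSetObjEquiv Y n).symm (φ n.unop x)
      naturality m n f := by
        ext x
        apply (TopCat.toSSetObjEquiv Y n).injective
        ext t
        exact hφ f.unop x t }

lemma realizationDesc_characteristicMap (x : X.obj (op n)) (t) :
    realizationDesc φ hφ (characteristicMap x t) = φ n x t := by
  have h : sSetTopAdj.unit.app X ≫ TopCat.toSSet.map (realizationDesc φ hφ) = _ :=
    (Adjunction.homEquiv_unit sSetTopAdj _ _ _).symm.trans (Equiv.apply_symm_apply _ _)
  exact congr(TopCat.toSSetObjEquiv Y (op n) (($h).app (op n) x) t)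

end Realization

section Vertex

open Opposite Simplicial

variable {X Y : SSet.{u}}

lemma map_const_leadingVertex_map {m n : SimplexCategory} (f : m ⟶ n) (x : X.obj (op n))
    (t : stdSimplex ℝ (Fin (m.len + 1))) :
    X.map (SimplexCategory.const ⦋0⦌ m (leadingVertex t)).op (X.map f.op x) =
      X.map (SimplexCategory.const ⦋0⦌ n (leadingVertex (stdSimplex.map f t))).op x := by
  have leadingVertex_map_f : leadingVertex (stdSimplex.map f t) = f (leadingVertex t) :=
    leadingVertex_map f.toOrderHom.monotone t
  rw [leadingVertex_map_f, ← Functor.map_comp_apply, ← op_comp,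
    SimplexCategory.const_comp]
  rfl

/-- The natural retraction `|X| → X₀` sending a point of the open cell of a simplex to the initial
vertex of that simplex. As it is rarely continuous for the discrete topology on `X₀`, we endow `X₀`
with the indiscrete one, so that the universal property of `|X|` applies. -/
noncomputable def realizationLeadingVertex (X : SSet.{u}) : |X| ⟶ TopCat.trivial.obj (X _⦋0⦌) :=
  realizationDesc
    (fun n x ↦ ⟨fun t ↦ X.map (SimplexCategory.const ⦋0⦌ n (leadingVertex t)).op x,
      continuous_top⟩)
    fun _ _ ↦ map_const_leadingVertex_map

lemma toTop_map_comp_realizationLeadingVertex (f : X ⟶ Y) :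
    SSet.toTop.map f ≫ realizationLeadingVertex Y =
      realizationLeadingVertex X ≫ TopCat.trivial.map (f.app (op ⦋0⦌)) := by
  refine realization_hom_ext fun n x t ↦ ?_
  let v : ⦋0⦌ ⟶ n := SimplexCategory.const ⦋0⦌ n (leadingVertex t)
  have eval_X : realizationLeadingVertex X (characteristicMap x t) = X.map v.op x :=
    realizationDesc_characteristicMap ..
  have eval_Y : realizationLeadingVertex Y (characteristicMap (f.app (op n) x) t) =
      Y.map v.op (f.app (op n) x) :=
    realizationDesc_characteristicMap ..
  change realizationLeadingVertex Y (SSet.toTop.map f (characteristicMap x t)) =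
    f.app (op ⦋0⦌) (realizationLeadingVertex X (characteristicMap x t))
  rw [toTop_map_characteristicMap, eval_X, eval_Y]
  exact (NatTrans.naturality_apply f v.op x).symm

lemma exists_vertex_app_eq_self_of_realization_fixed_point (f : X ⟶ X) {p : |X|}
    (hp : SSet.toTop.map f p = p) : ∃ x : X _⦋0⦌, f.app (op ⦋0⦌) x = x := by
  have h : realizationLeadingVertex X (SSet.toTop.map f p) =
      f.app (op ⦋0⦌) (realizationLeadingVertex X p) :=
    ConcreteCategory.congr_hom (toTop_map_comp_realizationLeadingVertex f) p
  rw [hp] at h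
  exact ⟨_, h.symm⟩

end Vertex

section Finite

open Finset Opposite Simplicial

variable {X : SSet.{u}} {k n : ℕ}

lemma injective_of_map_mem_nonDegenerate {m n : SimplexCategory} {f : m ⟶ n} {x : X.obj (op n)}
    (h : X.map f.op x ∈ X.nonDegenerate m.len) : Function.Injective f := by
  have := X.mono_of_nonDegenerate ⟨_, h⟩ f x rfl
  exact SimplexCategory.mono_iff_injective.1 this

variable (c : X.N → ℝ)

open Classical in
/-- The value of `c` at a simplex, extended by zero to the degenerate simplices. -/
noncomputable def simplexWeight (y : X _⦋k⦌) : ℝ :=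
  if h : y ∈ X.nonDegenerate k then c (.mk y h) else 0

open Classical in
/-- The weight of the face of `x` spanned by the sequence of vertices `ι`. Sequences that are not
monotone do not span a face and have weight zero; allowing them makes the index set of
`simplexHeight` functorial in `n`. -/
noncomputable def faceWeight (x : X _⦋n⦌) (ι : Fin (k + 1) → Fin (n + 1)) : ℝ :=
  if hι : Monotone ι then simplexWeight c (X.map (SimplexCategory.mkHom ⟨ι, hι⟩).op x) else 0

variable {c} in
lemma faceWeight_nonneg (hc : 0 ≤ c) (x : X _⦋n⦌) (ι : Fin (k + 1) → Fin (n + 1)) :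
    0 ≤ faceWeight c x ι := by
  unfold faceWeight simplexWeight
  split_ifs
  exacts [hc _, le_rfl, le_rfl]

lemma faceWeight_eq_zero_of_not_injective (x : X _⦋n⦌) {ι : Fin (k + 1) → Fin (n + 1)}
    (hι : ¬ Function.Injective ι) : faceWeight c x ι = 0 := by
  unfold faceWeight simplexWeight
  split_ifs with hm h
  · exact absurd (injective_of_map_mem_nonDegenerate h) hι
  · rfl
  · rfl

lemma faceWeight_of_monotone (x : X _⦋n⦌) {ι : Fin (k + 1) → Fin (n + 1)} (hι : Monotone ι) :
    faceWeight c x ι = simplexWeight c (X.map (SimplexCategory.mkHom ⟨ι, hι⟩).op x) :=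
  dif_pos hι

lemma faceWeight_map {m : ℕ} (f : ⦋m⦌ ⟶ ⦋n⦌) (x : X _⦋n⦌) (ι : Fin (k + 1) → Fin (m + 1)) :
    faceWeight c (X.map f.op x) ι = faceWeight c x (f ∘ ι) := by
  have hf : Monotone f := f.toOrderHom.monotone
  by_cases hι : Monotone ι
  · rw [faceWeight_of_monotone c _ hι, faceWeight_of_monotone c _ (hf.comp hι),
      ← Functor.map_comp_apply]
    rfl
  rw [faceWeight, dif_neg hι]
  by_cases hfι : Monotone (f ∘ ι)
  · -- If `f ∘ ι` were injective, it would be strictly monotone, and hence `ι` monotone.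
    refine (faceWeight_eq_zero_of_not_injective c x fun inj ↦ hι ?_).symm
    exact fun i j hij ↦ hij.eq_or_lt.elim (fun h ↦ h ▸ le_rfl)
      fun h ↦ (hf.reflect_lt (hfι.strictMono_of_injective inj h)).le
  · rw [faceWeight, dif_neg hfι]

lemma faceWeight_id {x : X _⦋n⦌} (hx : x ∈ X.nonDegenerate n) :
    faceWeight c x id = c (.mk x hx) := by
  rw [faceWeight_of_monotone c x monotone_id]
  have map_id : X.map (SimplexCategory.mkHom ⟨id, monotone_id⟩).op x = x :=
    congr($(X.map_id (op ⦋n⦌)) x)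
  rw [map_id, simplexWeight, dif_pos hx]

/-- The restriction of `realizationHeight c` to the simplex `x`: every nondegenerate face `y` of
`x` contributes a bump of size `c y` supported on the points whose carrier contains `y`. -/
noncomputable def simplexHeight (x : X _⦋n⦌) (t : stdSimplex ℝ (Fin (n + 1))) : ℝ :=
  ∑ᶠ k, ∑ ι : Fin (k + 1) → Fin (n + 1), faceWeight c x ι * ∏ j, t (ι j)

lemma simplexHeight_eq_sum_range (x : X _⦋n⦌) (t : stdSimplex ℝ (Fin (n + 1))) :
    simplexHeight c x t = ∑ k ∈ range (n + 1), ∑ ι : Fin (k + 1) → Fin (n + 1),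
      faceWeight c x ι * ∏ j, t (ι j) := by
  refine finsum_eq_sum_of_support_subset _ fun k hk ↦ ?_
  contrapose! hk
  refine Function.notMem_support.2 (sum_eq_zero fun ι _ ↦ ?_)
  rw [faceWeight_eq_zero_of_not_injective c x, zero_mul]
  intro inj
  have card_le : k + 1 ≤ n + 1 := by simpa using Fintype.card_le_of_injective ι inj
  exact hk (by simpa using card_le)

lemma continuous_simplexHeight (x : X _⦋n⦌) : Continuous (simplexHeight c x) := by
  have continuous_coord (i : Fin (n + 1)) : Continuous fun t : stdSimplex ℝ (Fin (n + 1)) ↦ t i :=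
    (continuous_apply i).comp continuous_subtype_val
  rw [funext (simplexHeight_eq_sum_range c x)]
  exact continuous_finsetSum _ fun k _ ↦ continuous_finsetSum _ fun ι _ ↦
    continuous_const.mul (continuous_finsetProd _ fun j _ ↦ continuous_coord (ι j))

lemma simplexHeight_map {m : ℕ} (f : ⦋m⦌ ⟶ ⦋n⦌) (x : X _⦋n⦌) (t : stdSimplex ℝ (Fin (m + 1))) :
    simplexHeight c (X.map f.op x) t = simplexHeight c x (stdSimplex.map f t) := by
  unfold simplexHeight
  simp only [faceWeight_map, stdSimplex_map_apply, sum_comp_mul_prod_eq_sum_mul_prod_sum_fiber]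

variable {c} in
lemma le_simplexHeight_barycenter (hc : 0 ≤ c) {x : X _⦋n⦌}
    (hx : x ∈ X.nonDegenerate n) :
    c (.mk x hx) * ((n + 1 : ℝ)⁻¹) ^ (n + 1) ≤ simplexHeight c x stdSimplex.barycenter := by
  have barycenter_apply (i : Fin (n + 1)) :
      (stdSimplex.barycenter : stdSimplex ℝ (Fin (n + 1))) i = (n + 1 : ℝ)⁻¹ :=
    (stdSimplex.barycenter_apply (𝕜 := ℝ) i).trans (by simp)
  have term_nonneg (k) (ι : Fin (k + 1) → Fin (n + 1)) :
      0 ≤ faceWeight c x ι * ∏ j, (stdSimplex.barycenter : stdSimplex ℝ (Fin (n + 1))) (ι j) :=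
    mul_nonneg (faceWeight_nonneg hc x ι) (prod_nonneg fun _ _ ↦ stdSimplex.zero_le _ _)
  calc c (.mk x hx) * ((n + 1 : ℝ)⁻¹) ^ (n + 1)
      = faceWeight c x id *
          ∏ j, (stdSimplex.barycenter : stdSimplex ℝ (Fin (n + 1))) (id j) := by
        simp [faceWeight_id c hx, barycenter_apply]
    _ ≤ ∑ ι : Fin (n + 1) → Fin (n + 1), faceWeight c x ι *
          ∏ j, (stdSimplex.barycenter : stdSimplex ℝ (Fin (n + 1))) (ι j) :=
        single_le_sum (fun ι _ ↦ term_nonneg n ι) (mem_univ id)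
    _ ≤ simplexHeight c x stdSimplex.barycenter := by
        rw [simplexHeight_eq_sum_range]
        exact single_le_sum (f := fun k ↦ ∑ ι : Fin (k + 1) → Fin (n + 1), _)
          (fun k _ ↦ sum_nonneg fun ι _ ↦ term_nonneg k ι) (self_mem_range_succ n)

/-- The continuous function on `|X|` in which every nondegenerate simplex `y` of `X` contributes a
bump of size `c y` on its open star. The lift adjusts universes. -/
noncomputable def realizationHeight : |X| ⟶ TopCat.of (ULift.{u} ℝ) :=
  realizationDesc
    (fun _ x ↦ ⟨fun t ↦ ⟨simplexHeight c x t⟩,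
      continuous_uliftUp.comp (continuous_simplexHeight c x)⟩)
    fun _ _ f x t ↦ congrArg ULift.up (simplexHeight_map c f x t)

lemma realizationHeight_characteristicMap (x : X _⦋n⦌) (t) :
    (realizationHeight c (characteristicMap x t)).down = simplexHeight c x t :=
  congrArg ULift.down (realizationDesc_characteristicMap ..)

lemma finite_of_compactSpace_realization (X : SSet.{u}) [CompactSpace |X|] : X.Finite := by
  refine ⟨?_⟩
  by_contra! h
  obtain ⟨a, ha⟩ : ∃ a : X.N → ℕ, Function.Surjective a := by
    let e := Infinite.natEmbedding X.N
    exact ⟨_, Function.invFun_surjective e.injective⟩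
  -- The second factor is the inverse of the value of a bump at the barycenter.
  let c (s : X.N) : ℝ := a s * (s.dim + 1) ^ (s.dim + 1)
  have hc : 0 ≤ c := fun s ↦ by positivity
  have height_continuous : Continuous fun p ↦ (realizationHeight c p).down :=
    continuous_uliftDown.comp (realizationHeight c).hom.continuous
  obtain ⟨B, hB⟩ := (isCompact_range height_continuous).bddAbove
  obtain ⟨i, hi⟩ := exists_nat_gt B
  obtain ⟨s, rfl⟩ := ha i
  refine hi.not_ge ?_
  calc (a s : ℝ) = c s * ((s.dim + 1 : ℝ)⁻¹) ^ (s.dim + 1) := by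
        rw [mul_assoc, ← mul_pow, mul_inv_cancel₀ (by positivity), one_pow, mul_one]
    _ ≤ simplexHeight c s.simplex stdSimplex.barycenter :=
        le_simplexHeight_barycenter hc s.nonDegenerate
    _ ≤ B := hB ⟨_, realizationHeight_characteristicMap c s.simplex _⟩

end Finite

section Nerve

variable {C : Type u} [Category.{v} C] {n : ℕ}

lemma exists_obj_eq_self_of_realization_fixed_point (F : C ⥤ C) {p : SSet.toTop.obj (nerve C)}
    (hp : SSet.toTop.map (nerveMap F) p = p) : ∃ X, F.obj X = X := by
  obtain ⟨x, hx⟩ := exists_vertex_app_eq_self_of_realization_fixed_point (nerveMap F) hp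
  exact ⟨nerveEquiv x, congrArg nerveEquiv hx⟩

lemma mem_nonDegenerate_nerve_of_obj_ne {σ : ComposableArrows C n}
    (h : ∀ i : Fin n, σ.obj i.castSucc ≠ σ.obj i.succ) : σ ∈ (nerve C).nonDegenerate n := by
  cases n with
  | zero => exact (nerve C).nondegenerate_zero ▸ Set.mem_univ σ
  | succ n =>
    refine (SSet.mem_nonDegenerate_iff_notMem_degenerate (X := nerve C) σ).2 fun hσ ↦ ?_
    rw [SSet.degenerate_eq_iUnion_range_σ] at hσ
    obtain ⟨i, (τ : ComposableArrows C n), rfl⟩ := Set.mem_iUnion.1 hσ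
    refine h i ((nerve.σ_obj i τ _).trans (.trans ?_ (nerve.σ_obj i τ _).symm))
    rw [Fin.predAbove_castSucc_self, Fin.predAbove_succ_self]

variable (G : C ⥤ C)

/-- The morphism `Gᵏ f : Gᵏ X ⟶ Gᵏ⁺¹ X`, a link of the chain `X ⟶ G X ⟶ G² X ⟶ ⋯` generated by `f`.
The recursion is on the innermost factor so that its clauses are well typed by the definition of
`G.obj^[k]`. -/
def iterateHom {X : C} (f : X ⟶ G.obj X) : ∀ k : ℕ, G.obj^[k] X ⟶ G.obj^[k + 1] X
  | 0 => f
  | k + 1 => iterateHom (G.map f) k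

lemma exists_obj_eq_self_of_hom_obj {d : ℕ} [(nerve C).HasDimensionLT d] {X : C}
    (f : X ⟶ G.obj X) : ∃ Y, G.obj Y = Y := by
  by_contra! h
  let σ : ComposableArrows C d :=
    ComposableArrows.mkOfObjOfMapSucc (fun i ↦ G.obj^[i] X) fun i ↦ iterateHom G f i
  have hσ : σ ∈ (nerve C).nonDegenerate d := by
    refine mem_nonDegenerate_nerve_of_obj_ne fun i ↦ ?_
    simpa [σ, Function.iterate_succ_apply'] using (h _).symm
  simpa using (nerve C).dim_lt_of_nonDegenerate ⟨σ, hσ⟩ d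

end Nerve

theorem exists_strict_fixed_point_of_natTrans_of_realization_fixed_point_general
    {C : Type u} [Category.{v} C] {d : ℕ} [(nerve C).HasDimensionLT d] (F F' : C ⥤ C)
    (φ : F ⟶ F') (p : SSet.toTop.obj (nerve C)) (hp : SSet.toTop.map (nerveMap F) p = p) :
    ∃ X : C, F'.obj X = X := by
  obtain ⟨X, hX⟩ := exists_obj_eq_self_of_realization_fixed_point F hp
  exact exists_obj_eq_self_of_hom_obj (d := d) F' (eqToHom hX.symm ≫ φ.app X)

/-- Let `C` be a small category such that `|N C|` is compact, let `F, F' : C ⥤ C`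
be functors and `φ : F ⟶ F'` a natural transformation.  If `|N F|` has a fixed point,
then `F'` has a strict fixed point, i.e. an object `X` with `F'(X) = X`. -/
theorem exists_strict_fixed_point_of_natTrans_of_realization_fixed_point {C : Type}
    [SmallCategory C] [CompactSpace (SSet.toTop.obj (nerve C))]
    (F F' : C ⥤ C) (φ : F ⟶ F') (p : SSet.toTop.obj (nerve C))
    (hp : nerveRealizationMap F p = p) :
    ∃ X : C, F'.obj X = X := by
  have := finite_of_compactSpace_realization (nerve C)
  obtain ⟨d, _⟩ := SSet.hasDimensionLT_of_finite (nerve C)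
  exact exists_strict_fixed_point_of_natTrans_of_realization_fixed_point_general
    (d := d) F F' φ p hp
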